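/- arXiv:2106.05937 — 2 statements merged into one kernel-verified Lean document; each statement's English description precedes it below -/
import Mathlib

section
/- Let X = {x_1, …, x_m} be a finite set, and let p0 and p1 be probability mass functions on X. Let i_1, …, i_m and j_1, …, j_m be permutations of {1, …, m} such that p0(x_{i_1}) ≤ p0(x_{i_2}) ≤ … ≤ p0(x_{i_m}) and p1(x_{j_1}) ≤ p1(x_{j_2}) ≤ … ≤ p1(x_{j_m}). Define bijections f0, f1 : X → X by f0(x_k) = x_k and f1(x_{j_k}) = x_{i_k}. Then for all bijections g0, g1 : X → X, the statistical distance between the pushforward of p0 under f0 and the pushforward of p1 under f1 is less than or equal to the statistical distance between the pushforward of p0 under g0 and the pushforward of p1 under g1; i.e., the sorted matching minimizes the statistical distance over all pairs of bijective encoders. -/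
/-!
For probability mass functions, `Δ(q0, q1) = 1 - ∑ min (q0 y) (q1 y)` (`statDistFin_eq`), so the
claim is that matching two families in sorted order maximizes the sum of the pairwise minima. By
the layer-cake formula, `min a b` is the integral over `t` of the product of the indicators of
`t < a` and `t < b` on `t ≥ 0`. For each fixed `t`, these indicators are nondecreasing along the
sorted families, so the rearrangement inequality applies pointwise in `t`, and integrating it
gives the claim (`sum_min_comp_perm_le`).
-/

open scoped BigOperators

/-- The statistical distance between two probability mass functions on a finite set:
the supremum over subsets `S` of `|∑_{x∈S} q0 x − ∑_{x∈S} q1 x|`. -/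
noncomputable def statDistFin {X : Type*} [Fintype X] (q0 q1 : X → ℝ) : ℝ :=
  ⨆ S : Finset X, |∑ x ∈ S, q0 x - ∑ x ∈ S, q1 x|

theorem statDistFin_eq {X : Type*} [Fintype X] (q0 q1 : X → ℝ)
    (h0 : ∑ y, q0 y = 1) (h1 : ∑ y, q1 y = 1) :
    statDistFin q0 q1 = 1 - ∑ y, min (q0 y) (q1 y) := by
  classical
  have key (u v : X → ℝ) (hu : ∑ y, u y = 1) (S : Finset X) :
      ∑ y ∈ S, u y - ∑ y ∈ S, v y ≤ 1 - ∑ y, min (u y) (v y) := by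
    rw [← hu, ← Finset.sum_sub_distrib, ← Finset.sum_sub_distrib]
    calc ∑ y ∈ S, (u y - v y) ≤ ∑ y ∈ S, (u y - min (u y) (v y)) :=
          Finset.sum_le_sum fun y _ => by linarith [min_le_right (u y) (v y)]
      _ ≤ ∑ y, (u y - min (u y) (v y)) :=
          Finset.sum_le_sum_of_subset_of_nonneg (Finset.subset_univ _)
            fun y _ _ => by linarith [min_le_left (u y) (v y)]
  unfold statDistFin
  apply le_antisymm
  · refine ciSup_le fun S => abs_le'.2 ⟨key q0 q1 h0 S, ?_⟩
    have h := key q1 q0 h1 S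
    simp only [min_comm (q1 _)] at h
    linarith
  -- The supremum is attained on the set where `q1 ≤ q0`.
  · refine le_trans ?_ (le_ciSup (Set.finite_range _).bddAbove
      (Finset.univ.filter fun y => q1 y ≤ q0 y))
    refine le_trans (le_of_eq ?_) (le_abs_self _)
    rw [← h0, ← Finset.sum_sub_distrib, ← Finset.sum_sub_distrib, Finset.sum_filter]
    refine Finset.sum_congr rfl fun y _ => ?_
    split_ifs with h
    · rw [min_eq_right h]
    · rw [min_eq_left (not_le.1 h).le, sub_self]

/-- The layer-cake indicator of `0 ≤ t < a`, whose integral over `t` is `a` when `a ≥ 0`. -/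
noncomputable def layer (a t : ℝ) : ℝ := (Set.Ico 0 a).indicator 1 t

theorem layer_mono (t : ℝ) : Monotone fun a => layer a t := fun _ _ h =>
  Set.indicator_le_indicator_of_subset (Set.Ico_subset_Ico_right h)
    (fun _ => zero_le_one) t

theorem layer_mul_layer (a b : ℝ) :
    (fun t => layer a t * layer b t) = (Set.Ico 0 (min a b)).indicator 1 := by
  funext t
  have h := Set.inter_indicator_mul (s := Set.Ico 0 a) (t := Set.Ico 0 b)
    (1 : ℝ → ℝ) 1 t
  rw [Set.Ico_inter_Ico, sup_idem] at h
  simpa [layer, Set.indicator_apply] using h.symm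

theorem integrable_layer_mul_layer (a b : ℝ) :
    MeasureTheory.Integrable fun t => layer a t * layer b t := by
  rw [layer_mul_layer, MeasureTheory.integrable_indicator_iff measurableSet_Ico]
  exact MeasureTheory.integrableOn_const (by simp)

theorem integral_layer_mul_layer {a b : ℝ} (ha : 0 ≤ a) (hb : 0 ≤ b) :
    ∫ t, layer a t * layer b t = min a b := by
  rw [layer_mul_layer, MeasureTheory.integral_indicator_one measurableSet_Ico]
  simp [ha, hb]

/-- The rearrangement inequality with `min` in place of the product. -/
theorem sum_min_comp_perm_le {m : ℕ} {a b : Fin m → ℝ} (ha : Monotone a) (hb : Monotone b)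
    (ha0 : ∀ k, 0 ≤ a k) (hb0 : ∀ k, 0 ≤ b k) (σ : Equiv.Perm (Fin m)) :
    ∑ k, min (a k) (b (σ k)) ≤ ∑ k, min (a k) (b k) := by
  have e (c : Fin m → ℝ) (hc : ∀ k, 0 ≤ c k) :
      ∑ k, min (a k) (c k) = ∫ t, ∑ k, layer (a k) t * layer (c k) t := by
    rw [MeasureTheory.integral_finsetSum _ fun k _ => integrable_layer_mul_layer _ _]
    exact Finset.sum_congr rfl fun k _ => (integral_layer_mul_layer (ha0 k) (hc k)).symm
  rw [e b hb0, e (fun k => b (σ k)) fun k => hb0 _]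
  refine MeasureTheory.integral_mono
    (MeasureTheory.integrable_finsetSum _ fun k _ => integrable_layer_mul_layer _ _)
    (MeasureTheory.integrable_finsetSum _ fun k _ => integrable_layer_mul_layer _ _) fun t => ?_
  have h : Monovary (fun k => layer (a k) t) fun k => layer (b k) t :=
    ((layer_mono t).comp ha).monovary ((layer_mono t).comp hb)
  exact h.sum_mul_comp_perm_le_sum_mul

/-- Sorting-based matching of discrete distributions minimizes the statistical distance
over all pairs of bijective encoders: let `X = {x 1, …, x m}`, let `i, j` be permutations
sorting `p0 ∘ x` and `p1 ∘ x` nondecreasingly, and let `f0 (x k) = x k`,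
`f1 (x (j k)) = x (i k)`. Then for all bijections `g0, g1 : X ≃ X`, the statistical
distance between the pushforwards of `p0, p1` under `f0, f1` is at most that of the
pushforwards under `g0, g1`. -/
theorem sorted_matching_minimizes_statDist
    {X : Type*} [Fintype X] (m : ℕ) (x : Fin m ≃ X)
    (p0 p1 : X → ℝ)
    (hp0 : ∀ y, 0 ≤ p0 y) (hp1 : ∀ y, 0 ≤ p1 y)
    (hp0sum : ∑ y, p0 y = 1) (hp1sum : ∑ y, p1 y = 1)
    (i j : Equiv.Perm (Fin m))
    (hi : Monotone (fun k => p0 (x (i k)))) (hj : Monotone (fun k => p1 (x (j k))))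
    (f0 f1 : X ≃ X)
    (hf0 : ∀ k, f0 (x k) = x k) (hf1 : ∀ k, f1 (x (j k)) = x (i k)) :
    ∀ g0 g1 : X ≃ X,
      statDistFin (fun y => p0 (f0.symm y)) (fun y => p1 (f1.symm y)) ≤
      statDistFin (fun y => p0 (g0.symm y)) (fun y => p1 (g1.symm y)) := by
  intro g0 g1
  have push (p : X → ℝ) (hp : ∑ y, p y = 1) (g : X ≃ X) : ∑ y, p (g.symm y) = 1 := by
    rw [← hp]
    exact Equiv.sum_comp g.symm p
  rw [statDistFin_eq _ _ (push p0 hp0sum f0) (push p1 hp1sum f1),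
    statDistFin_eq _ _ (push p0 hp0sum g0) (push p1 hp1sum g1)]
  refine sub_le_sub_left ?_ 1
  -- `σ` is the matching of sorted positions induced by the encoders `g0, g1`.
  let σ : Equiv.Perm (Fin m) := ((((i.trans x).trans g0).trans g1.symm).trans x.symm).trans j.symm
  have h := sum_min_comp_perm_le hi hj (fun _ => hp0 _) (fun _ => hp1 _) σ
  have ef : ∑ y, min (p0 (f0.symm y)) (p1 (f1.symm y)) =
      ∑ k, min (p0 (x (i k))) (p1 (x (j k))) := by
    rw [← Equiv.sum_comp (i.trans x)]
    refine Finset.sum_congr rfl fun k _ => ?_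
    have e0 : f0.symm (x (i k)) = x (i k) := by rw [Equiv.symm_apply_eq, hf0]
    have e1 : f1.symm (x (i k)) = x (j k) := by rw [Equiv.symm_apply_eq, hf1]
    simp only [Equiv.trans_apply, e0, e1]
  have eg : ∑ y, min (p0 (g0.symm y)) (p1 (g1.symm y)) =
      ∑ k, min (p0 (x (i k))) (p1 (x (j (σ k)))) := by
    rw [← Equiv.sum_comp ((i.trans x).trans g0)]
    refine Finset.sum_congr rfl fun k _ => ?_
    simp [σ]
  rw [ef, eg]
  exact h
end

section
/- Let m be a natural number and let a, b : Fin m → ℝ be monotone nondecreasing sequences. Then for every permutation σ of Fin m, ∑_{k} |a(k) − b(k)| ≤ ∑_{k} |a(k) − b(σ(k))|; i.e., matching two sequences in sorted order minimizes the sum of absolute differences over all matchings. -/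
open scoped BigOperators

/-!
An exchange argument, by induction on the length. A permutation of `Fin (n + 1)` sends `0` to some
`p` and is otherwise a permutation `e` of `Fin n` shifted by one, followed by the swap of `0` and
`p`. Undoing the swap matches `a 0` with `b 0` and changes only one other pair; since `a 0` and `b 0`
are the least terms, `abs_sub_add_abs_sub_le` shows that this does not increase the sum. The
remaining pairs are handled by the induction hypothesis applied to `e`.
-/

/-- Uncrossing two pairs: the case of two-term sequences `x ≤ y` and `u ≤ v`. -/
lemma abs_sub_add_abs_sub_le {x y u v : ℝ} (hxy : x ≤ y) (huv : u ≤ v) :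
    |x - u| + |y - v| ≤ |x - v| + |y - u| := by
  rcases abs_cases (x - u) with h₁ | h₁ <;> rcases abs_cases (y - v) with h₂ | h₂ <;>
    rcases abs_cases (x - v) with h₃ | h₃ <;> rcases abs_cases (y - u) with h₄ | h₄ <;> linarith

/-- Matching two nondecreasing sequences in sorted order minimizes the sum of absolute
differences over all matchings: for monotone `a, b : Fin m → ℝ` and any permutation `σ`,
`∑ k, |a k − b k| ≤ ∑ k, |a k − b (σ k)|`. -/
theorem sorted_matching_min_abs_sum
    (m : ℕ) (a b : Fin m → ℝ) (ha : Monotone a) (hb : Monotone b)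
    (σ : Equiv.Perm (Fin m)) :
    ∑ k, |a k - b k| ≤ ∑ k, |a k - b (σ k)| := by
  induction m with
  | zero => simp
  | succ n ih =>
    obtain ⟨⟨p, e⟩, rfl⟩ := Equiv.Perm.decomposeFin.symm.surjective σ
    have tail := ih (fun i => a i.succ) (fun i => b i.succ)
      (ha.comp Fin.strictMono_succ.monotone) (hb.comp Fin.strictMono_succ.monotone) e
    simp only [Fin.sum_univ_succ, Equiv.Perm.decomposeFin_symm_apply_zero,
      Equiv.Perm.decomposeFin_symm_apply_succ]
    cases p using Fin.cases with
    | zero => simpa using tail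
    | succ q =>
      -- The swap affects the tail only at the index `e.symm q`, which it matches with `b 0`.
      have rest : ∑ i ∈ Finset.univ.erase (e.symm q),
            |a i.succ - b (Equiv.swap 0 q.succ (e i).succ)| =
          ∑ i ∈ Finset.univ.erase (e.symm q), |a i.succ - b (e i).succ| := by
        refine Finset.sum_congr rfl fun i hi => ?_
        have hne : e i ≠ q := fun h => Finset.ne_of_mem_erase hi (by simp [← h])
        rw [Equiv.swap_apply_of_ne_of_ne (Fin.succ_ne_zero _)
          (fun h => hne (Fin.succ_injective _ h))]
      rw [← Finset.add_sum_erase _ (fun i => |a i.succ - b (e i).succ|)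
        (Finset.mem_univ (e.symm q))] at tail
      rw [← Finset.add_sum_erase _ (fun i => |a i.succ - b (Equiv.swap 0 q.succ (e i).succ)|)
        (Finset.mem_univ (e.symm q)), rest]
      have exchange := abs_sub_add_abs_sub_le (ha (Fin.zero_le (e.symm q).succ))
        (hb (Fin.zero_le q.succ))
      simp only [Equiv.apply_symm_apply, Equiv.swap_apply_right] at tail ⊢
      linarith
end
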